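/- Let $(W,S)$ be a Coxeter system with $S$ finite. Let $Q_W=\bigcup_{w\in W}w^{-1}Sw$ be its set of reflections, a quandle under $x*y=y^{-1}xy$, let $c(W)$ be the number of $W$-conjugacy classes of reflections, and let $$\mathrm{Ad}(Q_W)=\langle e_x\ (x\in Q_W)\mid e_y^{-1}e_xe_y=e_{x*y}\ (x,y\in Q_W)\rangle$$ be the adjoint group of $Q_W$. Then $\mathrm{Ad}(Q_W)_{\mathrm{Ab}}\cong\mathbb{Z}^{c(W)}$, the kernel of the abelianization map $\mathrm{Ad}(Q_W)\to\mathrm{Ad}(Q_W)_{\mathrm{Ab}}$ is isomorphic to the commutator subgroup $[W,W]$, and so there is a group extension $$1\to[W,W]\to\mathrm{Ad}(Q_W)\to\mathbb{Z}^{c(W)}\to1$$ whose projection is the abelianization map followed by an isomorphism $\mathrm{Ad}(Q_W)_{\mathrm{Ab}}\cong\mathbb{Z}^{c(W)}$. If $c(W)=1$ (that is, $S\neq\emptyset$ and all reflections of $W$ are conjugate in $W$), then this extension splits, and $\mathrm{Ad}(Q_W)$ is isomorphic to a semidirect product $[W,W]\rtimes\mathbb{Z}$; that is, there is an action of $\mathbb{Z}$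 on $[W,W]$ by automorphisms such that $\mathrm{Ad}(Q_W)\cong[W,W]\rtimes\mathbb{Z}$. -/

import Mathlib

universe u v

/-- The Coxeter quandle `Q_W`: the set of reflections of `W` (its operation is given below). -/
def CoxeterQuandle {B : Type u} {W : Type v} [Group W] {M : CoxeterMatrix B}
    (cs : CoxeterSystem M W) : Type v :=
  {w : W // cs.IsReflection w}

/-- The quandle structure on the set of reflections, by conjugation. Mathlib's quandles act from
the left, `x ◃ y = x y x⁻¹`; a reflection `x` is its own inverse, so this is `y * x = x⁻¹ y x`
in the right-handed convention. -/
instance CoxeterQuandle.instQuandle {B : Type u} {W : Type v} [Group W] {M : CoxeterMatrix B}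
    (cs : CoxeterSystem M W) : Quandle (CoxeterQuandle cs) where
  act x y := ⟨x.1 * y.1 * x.1⁻¹, y.2.conj x.1⟩
  self_distrib := by
    rintro ⟨x, _⟩ ⟨y, _⟩ ⟨z, _⟩
    apply Subtype.ext
    show x * (y * z * y⁻¹) * x⁻¹ = (x * y * x⁻¹) * (x * z * x⁻¹) * (x * y * x⁻¹)⁻¹
    group
  invAct x y := ⟨x.1⁻¹ * y.1 * x.1, by simpa using y.2.conj x.1⁻¹⟩
  left_inv := by
    rintro ⟨x, _⟩ ⟨y, _⟩
    apply Subtype.ext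
    show x⁻¹ * (x * y * x⁻¹) * x = y
    group
  right_inv := by
    rintro ⟨x, _⟩ ⟨y, _⟩
    apply Subtype.ext
    show x * (x⁻¹ * y * x) * x⁻¹ = y
    group
  fix := by
    rintro ⟨x, hx⟩
    apply Subtype.ext
    show x * x * x⁻¹ = x
    group

/-- The adjoint (enveloping) group `Ad(Q_W)`: the group generated by symbols `e_x`, `x ∈ Q_W`,
subject to `e_x e_y e_x⁻¹ = e_{x ◃ y}`. Replacing `y` by `x⁻¹ y x`, these relations are exactly
`e_x⁻¹ e_y e_x = e_{x⁻¹ y x}`. -/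
abbrev CoxeterAd {B : Type u} {W : Type v} [Group W] {M : CoxeterMatrix B}
    (cs : CoxeterSystem M W) : Type v :=
  Rack.EnvelGroup (CoxeterQuandle cs)

/-- The set of `W`-conjugacy classes of reflections. -/
def reflectionClasses {B : Type u} {W : Type v} [Group W] {M : CoxeterMatrix B}
    (cs : CoxeterSystem M W) : Set (ConjClasses W) :=
  ConjClasses.mk '' {t : W | cs.IsReflection t}

/-- There are finitely many classes of reflections, as each contains a simple reflection. -/
theorem reflectionClasses_finite {B : Type u} [Finite B] {W : Type v} [Group W]
    {M : CoxeterMatrix B} (cs : CoxeterSystem M W) : (reflectionClasses cs).Finite := by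
  refine (Set.finite_range fun i : B => ConjClasses.mk (cs.simple i)).subset ?_
  rintro _ ⟨_, ⟨w, i, rfl⟩, rfl⟩
  exact ⟨i, ConjClasses.mk_eq_mk_iff_isConj.mpr (isConj_iff.mpr ⟨w, rfl⟩)⟩

/-- `c(W)`: the number of `W`-conjugacy classes of reflections. -/
noncomputable def numReflectionClasses {B : Type u} {W : Type v} [Group W] {M : CoxeterMatrix B}
    (cs : CoxeterSystem M W) : ℕ :=
  (reflectionClasses cs).ncard

/-!
For an involutory quandle, `e_x ↦ e_x²` extends to an endomorphism of the adjoint group with central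
image, inducing multiplication by `2` on the abelianization, which is free on the orbits. As the
endomorphism kills commutators and multiplication by `2` is injective, its image meets the
commutator subgroup trivially.

For the reflections of `W`, this image contains the kernel of `Ad(Q_W) → W`: the images of the
simple generators in the quotient by the squares satisfy the Coxeter relations, because
`e_z = (e_s e_t)^k e_s` there for each reflection `z = (st)^k s`, and `z = s` for `k = m(s,t)`.
Hence `Ad(Q_W) → W` restricts to an isomorphism of commutator subgroups.
-/

open scoped Quandles

section Group

variable {N G Q : Type*} [Group N] [Group G] [Group Q]

theorem conj_mul_pow_succ_mul {a b : G} (ha : a ^ 2 = 1) (k : ℕ) :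
    a * ((a * b) ^ (k + 1) * a) * a⁻¹ = (b * a) ^ k * b :=
  calc a * ((a * b) ^ (k + 1) * a) * a⁻¹
    _ = a ^ 2 * (b * (a * b) ^ k) := by
      rw [pow_succ', pow_two]
      simp only [mul_assoc, mul_inv_cancel, mul_one]
    _ = (b * a) ^ k * b := by rw [ha, one_mul, mul_pow_mul]

/-- The isomorphism of commutator subgroups induced by a surjective homomorphism whose kernel
contains no nontrivial product of commutators. -/
noncomputable def commutatorMulEquivOfDisjoint (f : G →* Q) (hf : Function.Surjective f)
    (h : Disjoint f.ker (commutator G)) : commutator G ≃* commutator Q :=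
  have map_commutator_eq : (commutator G).map f = commutator Q := by
    rw [commutator_def, Subgroup.map_commutator, Subgroup.map_top_of_surjective f hf,
      commutator_def]
  have injective : Function.Injective (f.subgroupMap (commutator G)) := by
    rw [injective_iff_map_eq_one]
    rintro ⟨g, hg⟩ hfg
    exact Subtype.ext (Subgroup.disjoint_def.mp h (congrArg Subtype.val hfg) hg)
  (MulEquiv.ofBijective _ ⟨injective, f.subgroupMap_surjective _⟩).trans
    (MulEquiv.subgroupCongr map_commutator_eq)

/-- The extension `1 → [G,G] → G → G_Ab → 1`, with its kernel and its quotient replaced by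
isomorphic groups. -/
noncomputable def abelianizationExtension (i : N ≃* commutator G) (e : Abelianization G ≃* Q) :
    GroupExtension N G Q where
  inl := (commutator G).subtype.comp i.toMonoidHom
  rightHom := e.toMonoidHom.comp Abelianization.of
  inl_injective := Subtype.val_injective.comp i.injective
  range_inl_eq_ker_rightHom := by
    rw [MonoidHom.range_comp, MonoidHom.range_eq_top.mpr i.surjective, ← MonoidHom.range_eq_map,
      Subgroup.range_subtype, ← MonoidHom.comap_ker, MonoidHom.ker_eq_bot _ e.injective,
      MonoidHom.comap_bot, Abelianization.ker_of]
  rightHom_surjective := e.surjective.comp (QuotientGroup.mk'_surjective _)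

theorem nonempty_splitting_of_freeGroupBasis {ι : Type*} (b : FreeGroupBasis ι Q)
    (E : GroupExtension N G Q) : Nonempty E.Splitting := by
  let σ : Q →* G := b.lift fun i => Function.surjInv E.rightHom_surjective (b i)
  have rightHom_comp : E.rightHom.comp σ = MonoidHom.id Q :=
    b.ext_hom _ _ fun i => by simp [σ, Function.surjInv_eq]
  exact ⟨⟨σ, DFunLike.congr_fun rightHom_comp⟩⟩

end Group

section EnvelGroup

open scoped IsMulCommutative

variable {R : Type*} [Rack R] {H : Type*} [Group H]

/-- The generator `e_x` of the enveloping group of a rack. -/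
def envelGen (x : R) : Rack.EnvelGroup R :=
  Rack.toEnvelGroup R x

theorem envelGen_act (x y : R) : envelGen (x ◃ y) = envelGen x * envelGen y * (envelGen x)⁻¹ :=
  (Rack.toEnvelGroup R).map_act

/-- The universal property of the enveloping group. -/
def envelLift (f : R → H) (hf : ∀ x y, f (x ◃ y) = f x * f y * (f x)⁻¹) :
    Rack.EnvelGroup R →* H :=
  Rack.toEnvelGroup.map (G := H) ⟨f, hf _ _⟩

theorem envelGroup_hom_ext {f g : Rack.EnvelGroup R →* H}
    (h : ∀ x, f (envelGen x) = g (envelGen x)) : f = g :=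
  Rack.toEnvelGroup.map.symm.injective (ShelfHom.ext (funext h))

theorem mem_center_of_commute_envelGen {g : Rack.EnvelGroup R}
    (h : ∀ x, Commute g (envelGen x)) : g ∈ Subgroup.center (Rack.EnvelGroup R) := by
  have conj_eq_id : (MulAut.conj g).toMonoidHom = MonoidHom.id (Rack.EnvelGroup R) :=
    envelGroup_hom_ext fun x => mul_inv_eq_iff_eq_mul.mpr (h x)
  exact Subgroup.mem_center_iff.mpr fun a =>
    (mul_inv_eq_iff_eq_mul.mp (DFunLike.congr_fun conj_eq_id a)).symm

variable (R) in
/-- The orbits of a rack under its inner automorphisms, as the quotient by the equivalence relation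
generated by `y ∼ x ◃ y`. -/
def RackOrbits : Type _ :=
  Quot fun y z : R => ∃ x, x ◃ y = z

namespace RackOrbits

/-- The orbit of an element. -/
def mk (x : R) : RackOrbits R :=
  Quot.mk _ x

theorem mk_act (x y : R) : mk (x ◃ y) = mk y :=
  (Quot.sound ⟨x, rfl⟩).symm

variable (R) in
/-- The homomorphism from the enveloping group to the free abelian group on the orbits which sends
`e_x` to the orbit of `x`. -/
noncomputable def ofEnvelGroup :
    Rack.EnvelGroup R →* Multiplicative (RackOrbits R →₀ ℤ) :=
  envelLift (fun x => .ofAdd (.single (mk x) 1)) fun x y => by rw [mk_act, mul_inv_cancel_comm]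

/-- The common image in the abelianization of the generators `e_x` with `x` in a given orbit. -/
def toAbelianization : RackOrbits R → Abelianization (Rack.EnvelGroup R) :=
  Quot.lift (fun x => Abelianization.of (envelGen x)) <| by
    rintro y _ ⟨x, rfl⟩
    rw [envelGen_act, map_mul, map_mul, map_inv, mul_inv_cancel_comm]

theorem toAbelianization_mk (x : R) :
    toAbelianization (mk x) = Abelianization.of (envelGen x) :=
  rfl

variable (R) in
/-- The homomorphism from the free abelian group on the orbits which extends `toAbelianization`. -/
noncomputable def linearCombination :
    (RackOrbits R →₀ ℤ) →ₗ[ℤ] Additive (Abelianization (Rack.EnvelGroup R)) :=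
  Finsupp.linearCombination ℤ fun o => .ofMul (toAbelianization o)

theorem linearCombination_single_mk (x : R) :
    linearCombination R (.single (mk x) 1) = .ofMul (Abelianization.of (envelGen x)) := by
  rw [linearCombination, Finsupp.linearCombination_single, one_smul, toAbelianization_mk]

variable (R) in
/-- The abelianization of the enveloping group is free abelian, with the classes of the generators
as basis, one for each orbit. -/
noncomputable def abelianizationBasis :
    Module.Basis (RackOrbits R) ℤ (Additive (Abelianization (Rack.EnvelGroup R))) :=
  let coords := (Abelianization.lift (ofEnvelGroup R)).toAdditiveLeft.toIntLinearMap
  have coords_of (x : R) : coords (.ofMul (Abelianization.of (envelGen x))) = .single (mk x) 1 :=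
    rfl
  have coords_comp : coords.comp (linearCombination R) = LinearMap.id := by
    refine Finsupp.lhom_ext' fun o => LinearMap.ext_ring ?_
    obtain ⟨x, rfl⟩ := Quot.exists_rep o
    exact (congrArg coords (linearCombination_single_mk x)).trans (coords_of x)
  have comp_coords : (linearCombination R).comp coords = LinearMap.id := by
    suffices (linearCombination R).toAddMonoidHom.toMultiplicativeLeft.comp
        (Abelianization.lift (ofEnvelGroup R)) = MonoidHom.id _ from
      LinearMap.ext fun a => DFunLike.congr_fun this a
    exact Abelianization.hom_ext _ _ (envelGroup_hom_ext linearCombination_single_mk)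
  .ofRepr (.ofLinearMap coords (linearCombination R) coords_comp comp_coords)

end RackOrbits

variable (R) in
theorem isMulTorsionFree_abelianization_envelGroup :
    IsMulTorsionFree (Abelianization (Rack.EnvelGroup R)) :=
  Function.Injective.isMulTorsionFree (Abelianization.lift (RackOrbits.ofEnvelGroup R))
    (RackOrbits.abelianizationBasis R).repr.injective

theorem envelGen_sq_mem_center (hR : Rack.IsInvolutory R) (x : R) :
    envelGen x ^ 2 ∈ Subgroup.center (Rack.EnvelGroup R) :=
  mem_center_of_commute_envelGen fun y => mul_inv_eq_iff_eq_mul.mp <|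
    calc envelGen x ^ 2 * envelGen y * (envelGen x ^ 2)⁻¹
      _ = envelGen (x ◃ x ◃ y) := by
        simp only [envelGen_act, pow_two, mul_inv_rev, mul_assoc]
      _ = envelGen y := by rw [hR x y]

theorem envelGen_act_sq (hR : Rack.IsInvolutory R) (x y : R) :
    envelGen (x ◃ y) ^ 2 = envelGen y ^ 2 := by
  rw [envelGen_act, conj_pow, Subgroup.mem_center_iff.mp (envelGen_sq_mem_center hR y),
    mul_inv_cancel_right]

/-- For an involutory rack, the endomorphism `e_x ↦ e_x²` of the enveloping group. -/
def envelSq (hR : Rack.IsInvolutory R) : Rack.EnvelGroup R →* Rack.EnvelGroup R :=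
  (Subgroup.center _).subtype.comp <|
    envelLift (fun x => ⟨envelGen x ^ 2, envelGen_sq_mem_center hR x⟩) fun x y => by
      rw [mul_inv_cancel_comm]
      exact Subtype.ext (envelGen_act_sq hR x y)

theorem range_envelSq_le_center (hR : Rack.IsInvolutory R) :
    (envelSq hR).range ≤ Subgroup.center (Rack.EnvelGroup R) := by
  rintro _ ⟨g, rfl⟩
  exact SetLike.coe_mem _

theorem commutator_le_ker_envelSq (hR : Rack.IsInvolutory R) :
    commutator (Rack.EnvelGroup R) ≤ (envelSq hR).ker := by
  rw [← Subgroup.map_eq_bot_iff, commutator_def, Subgroup.map_commutator, eq_bot_iff,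
    ← Subgroup.commutator_center_left ⊤]
  exact Subgroup.commutator_mono
    ((envelSq hR).range_eq_map.symm.trans_le (range_envelSq_le_center hR)) le_top

theorem abelianization_of_envelSq (hR : Rack.IsInvolutory R) (g : Rack.EnvelGroup R) :
    Abelianization.of (envelSq hR g) = Abelianization.of g ^ 2 := by
  suffices Abelianization.of.comp (envelSq hR) = (powMonoidHom 2).comp Abelianization.of from
    DFunLike.congr_fun this g
  exact envelGroup_hom_ext fun x => map_pow Abelianization.of (envelGen x) 2

theorem disjoint_range_envelSq_commutator (hR : Rack.IsInvolutory R) :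
    Disjoint (envelSq hR).range (commutator (Rack.EnvelGroup R)) := by
  rw [Subgroup.disjoint_def]
  rintro _ ⟨g, rfl⟩ hg
  have := isMulTorsionFree_abelianization_envelGroup R
  rw [← Abelianization.ker_of, MonoidHom.mem_ker, abelianization_of_envelSq, sq_eq_one,
    ← MonoidHom.mem_ker, Abelianization.ker_of] at hg
  exact commutator_le_ker_envelSq hR hg

end EnvelGroup

section Coxeter

variable {B : Type u} {W : Type v} [Group W] {M : CoxeterMatrix B} {cs : CoxeterSystem M W}

namespace CoxeterQuandle

theorem coe_act (x y : CoxeterQuandle cs) : (x ◃ y).1 = x.1 * y.1 * x.1⁻¹ :=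
  rfl

theorem coe_sq (x : CoxeterQuandle cs) : x.1 ^ 2 = 1 :=
  x.2.pow_two

variable (cs) in
theorem isInvolutory : Rack.IsInvolutory (CoxeterQuandle cs) := fun x y =>
  Subtype.ext <|
    calc x.1 * (x.1 * y.1 * x.1⁻¹) * x.1⁻¹
      _ = x.1 ^ 2 * y.1 * (x.1 ^ 2)⁻¹ := by simp only [pow_two, mul_inv_rev, mul_assoc]
      _ = y.1 := by rw [coe_sq, inv_one, mul_one, one_mul]

variable (cs) in
/-- The simple reflections as elements of the Coxeter quandle. -/
def simple (i : B) : CoxeterQuandle cs :=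
  ⟨cs.simple i, cs.isReflection_simple i⟩

theorem isConj_induction {p : CoxeterQuandle cs → Prop} {x y : CoxeterQuandle cs}
    (hxy : IsConj x.1 y.1) (base : p x) (act : ∀ i z, p z → p (simple cs i ◃ z)) : p y := by
  obtain ⟨w, hw⟩ := isConj_iff.mp hxy
  obtain rfl : ⟨w * x.1 * w⁻¹, x.2.conj w⟩ = y := Subtype.ext hw
  clear hw hxy
  induction w using cs.simple_induction_left with
  | one =>
    have coe_eq : 1 * x.1 * 1⁻¹ = x.1 := by group
    exact (congrArg p (Subtype.ext coe_eq)).mpr base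
  | mul_simple_left w i ih =>
    have coe_eq : cs.simple i * w * x.1 * (cs.simple i * w)⁻¹ =
        cs.simple i * (w * x.1 * w⁻¹) * (cs.simple i)⁻¹ := by group
    exact (congrArg p (Subtype.ext coe_eq)).mpr (act i _ ih)

theorem induction {p : CoxeterQuandle cs → Prop} (base : ∀ i, p (simple cs i))
    (act : ∀ i x, p x → p (simple cs i ◃ x)) (x : CoxeterQuandle cs) : p x := by
  obtain ⟨w, i, hx⟩ := x.2
  exact isConj_induction (isConj_iff.mpr ⟨w, hx.symm⟩) (base i) act

/-- The `W`-conjugacy class of the reflections in an orbit of the Coxeter quandle. -/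
def orbitToReflectionClass : RackOrbits (CoxeterQuandle cs) → reflectionClasses cs :=
  Quot.lift (fun x => ⟨ConjClasses.mk x.1, x.1, x.2, rfl⟩) <| by
    rintro y _ ⟨x, rfl⟩
    exact Subtype.ext (ConjClasses.mk_eq_mk_iff_isConj.mpr (isConj_iff.mpr ⟨x.1, rfl⟩))

theorem orbitToReflectionClass_bijective :
    Function.Bijective (orbitToReflectionClass (cs := cs)) := by
  constructor
  · rintro ⟨x⟩ ⟨y⟩ h
    have isConj : IsConj x.1 y.1 := ConjClasses.mk_eq_mk_iff_isConj.mp (congrArg Subtype.val h)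
    exact isConj_induction (p := fun z => RackOrbits.mk x = RackOrbits.mk z) isConj rfl
      fun i z hz => hz.trans (RackOrbits.mk_act _ z).symm
  · rintro ⟨_, t, ht, rfl⟩
    exact ⟨RackOrbits.mk ⟨t, ht⟩, rfl⟩

end CoxeterQuandle

namespace CoxeterAd

open CoxeterQuandle

variable (cs) in
/-- The homomorphism `Ad(Q_W) → W` sending `e_x` to `x`. -/
def toGroup : CoxeterAd cs →* W :=
  envelLift (fun x => x.1) coe_act

variable (cs) in
theorem toGroup_surjective : Function.Surjective (toGroup cs) := by
  rw [← MonoidHom.range_eq_top, eq_top_iff, ← cs.subgroup_closure_range_simple,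
    Subgroup.closure_le]
  rintro _ ⟨i, rfl⟩
  exact ⟨envelGen (simple cs i), rfl⟩

section KillsSquares

variable {K : Type*} [Group K] {π : CoxeterAd cs →* K}

theorem map_envelGen_eq_pow_mul {x y z : CoxeterQuandle cs} (hx : π (envelGen x) ^ 2 = 1)
    (hy : π (envelGen y) ^ 2 = 1) {k : ℕ} (hz : z.1 = (x.1 * y.1) ^ k * x.1) :
    π (envelGen z) = (π (envelGen x) * π (envelGen y)) ^ k * π (envelGen x) := by
  induction k generalizing x y z with
  | zero =>
    obtain rfl : z = x := Subtype.ext (by simpa using hz)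
    simp
  | succ k ih =>
    have coe_act_eq : (x ◃ z).1 = (y.1 * x.1) ^ k * y.1 := by
      rw [coe_act, hz, conj_mul_pow_succ_mul (coe_sq x)]
    have map_act_eq := ih hy hx coe_act_eq
    rw [envelGen_act, map_mul, map_mul, map_inv, ← conj_mul_pow_succ_mul hx] at map_act_eq
    exact mul_left_cancel (mul_right_cancel map_act_eq)

theorem isLiftable_map_envelGen (hπ : ∀ i, π (envelGen (simple cs i)) ^ 2 = 1) :
    M.IsLiftable fun i => π (envelGen (simple cs i)) := fun i j =>
  mul_eq_right.mp (map_envelGen_eq_pow_mul (hπ i) (hπ j) (z := simple cs i) (by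
    rw [simple, simple, cs.simple_mul_simple_pow, one_mul])).symm

theorem ker_toGroup_le_ker (hπ : ∀ i, π (envelGen (simple cs i)) ^ 2 = 1) :
    (toGroup cs).ker ≤ π.ker := by
  let f : W →* K := cs.lift ⟨_, isLiftable_map_envelGen hπ⟩
  have f_simple (i : B) : f (simple cs i).1 = π (envelGen (simple cs i)) :=
    cs.lift_apply_simple (isLiftable_map_envelGen hπ) i
  have f_coe (x : CoxeterQuandle cs) : f x.1 = π (envelGen x) := by
    induction x using CoxeterQuandle.induction with
    | base i => exact f_simple i
    | act i x ih =>
      rw [coe_act, envelGen_act, map_mul, map_mul, map_mul, map_mul, map_inv, map_inv, f_simple, ih]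
  have f_comp_toGroup : f.comp (toGroup cs) = π := envelGroup_hom_ext f_coe
  rw [← f_comp_toGroup, ← MonoidHom.comap_ker]
  exact Subgroup.comap_mono bot_le

end KillsSquares

variable (cs)

theorem ker_toGroup_le_range_envelSq :
    (toGroup cs).ker ≤ (envelSq (isInvolutory cs)).range := by
  have : (envelSq (isInvolutory cs)).range.Normal :=
    ⟨fun a ha g => by
      rwa [Subgroup.mem_center_iff.mp (range_envelSq_le_center _ ha) g, mul_inv_cancel_right]⟩
  rw [← QuotientGroup.ker_mk' (envelSq (isInvolutory cs)).range]
  refine ker_toGroup_le_ker fun i => ?_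
  rw [← map_pow, ← MonoidHom.mem_ker, QuotientGroup.ker_mk']
  exact ⟨envelGen (simple cs i), rfl⟩

/-- The isomorphism of commutator subgroups induced by `Ad(Q_W) → W`. -/
noncomputable def commutatorEquiv : commutator (CoxeterAd cs) ≃* commutator W :=
  commutatorMulEquivOfDisjoint (toGroup cs) (toGroup_surjective cs) <|
    (disjoint_range_envelSq_commutator _).mono_left (ker_toGroup_le_range_envelSq cs)

variable {cs} {F : Type*} [AddCommGroup F]

/-- The abelianization of `Ad(Q_W)` as the free abelian group on the classes of reflections. -/
noncomputable def abelianizationEquiv (b : Module.Basis (reflectionClasses cs) ℤ F) :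
    Abelianization (CoxeterAd cs) ≃* Multiplicative F :=
  AddEquiv.toMultiplicativeRight <| LinearEquiv.toAddEquiv <|
    (RackOrbits.abelianizationBasis _).equiv b (.ofBijective _ orbitToReflectionClass_bijective)

theorem nonempty_mulEquiv_int (b : Module.Basis (reflectionClasses cs) ℤ F)
    (h : numReflectionClasses cs = 1) : Nonempty (Multiplicative F ≃* Multiplicative ℤ) := by
  obtain ⟨c, hc⟩ := Set.ncard_eq_one.mp h
  have : Subsingleton (reflectionClasses cs) := hc ▸ inferInstance
  exact ⟨AddEquiv.toMultiplicative
    (b.repr.trans (Finsupp.uniqueLinearEquiv ℤ ℤ ⟨c, hc ▸ rfl⟩)).toAddEquiv⟩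

end CoxeterAd

end Coxeter

theorem stmt_17_general {B : Type u} {W : Type v} [Group W] {M : CoxeterMatrix B}
    (cs : CoxeterSystem M W) {F : Type*} [AddCommGroup F]
    (b : Module.Basis (reflectionClasses cs) ℤ F) :
    (∃ (e : Abelianization (CoxeterAd cs) ≃* Multiplicative F)
        (E : GroupExtension (commutator W) (CoxeterAd cs) (Multiplicative F)),
        E.rightHom = e.toMonoidHom.comp Abelianization.of ∧
        (numReflectionClasses cs = 1 → Nonempty E.Splitting)) ∧
    Nonempty ((Abelianization.of : CoxeterAd cs →* Abelianization (CoxeterAd cs)).ker ≃*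
      commutator W) ∧
    (numReflectionClasses cs = 1 →
      ∃ α : Multiplicative ℤ →* MulAut (commutator W),
        Nonempty (CoxeterAd cs ≃* (commutator W) ⋊[α] Multiplicative ℤ)) := by
  let e := CoxeterAd.abelianizationEquiv b
  let E := abelianizationExtension (CoxeterAd.commutatorEquiv cs).symm e
  have splitting (f : Multiplicative F ≃* Multiplicative ℤ) : Nonempty E.Splitting :=
    nonempty_splitting_of_freeGroupBasis
      (.ofRepr (f.trans (FreeGroup.mulEquivIntOfUnique (α := Unit)).symm)) E
  refine ⟨⟨e, E, rfl, fun h => ?_⟩, ⟨?_⟩, fun h => ?_⟩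
  · exact (CoxeterAd.nonempty_mulEquiv_int b h).elim splitting
  · exact (MulEquiv.subgroupCongr (Abelianization.ker_of _)).trans (CoxeterAd.commutatorEquiv cs)
  · obtain ⟨f⟩ := CoxeterAd.nonempty_mulEquiv_int b h
    obtain ⟨s⟩ := splitting f
    exact ⟨_, ⟨s.semidirectProductMulEquiv.symm.trans
      (SemidirectProduct.congr' (MulEquiv.refl _) f)⟩⟩

theorem stmt_17 {B : Type u} [Finite B] {W : Type v} [Group W] {M : CoxeterMatrix B}
    (cs : CoxeterSystem M W) :
    -- the extension `1 → [W,W] → Ad(Q_W) → ℤ^{c(W)} → 1` given by abelianization,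
    -- which splits if `c(W) = 1`
    (∃ (e : Abelianization (CoxeterAd cs) ≃*
          Multiplicative (Fin (numReflectionClasses cs) → ℤ))
        (E : GroupExtension (commutator W) (CoxeterAd cs)
          (Multiplicative (Fin (numReflectionClasses cs) → ℤ))),
        E.rightHom = e.toMonoidHom.comp Abelianization.of ∧
        (numReflectionClasses cs = 1 → Nonempty E.Splitting)) ∧
    -- the kernel of the abelianization map is isomorphic to `[W,W]`
    Nonempty ((Abelianization.of : CoxeterAd cs →* Abelianization (CoxeterAd cs)).ker ≃*
      commutator W) ∧
    -- if `c(W) = 1`, then `Ad(Q_W) ≅ [W,W] ⋊ ℤ`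
    (numReflectionClasses cs = 1 →
      ∃ α : Multiplicative ℤ →* MulAut (commutator W),
        Nonempty (CoxeterAd cs ≃* (commutator W) ⋊[α] Multiplicative ℤ)) := by
  have := (reflectionClasses_finite cs).to_subtype
  exact stmt_17_general cs <| (Pi.basisFun ℤ _).reindex
    (Finite.equivFinOfCardEq (Nat.card_coe_set_eq (reflectionClasses cs))).symm
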